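/- Suppose there is γ > 0 such that for every coordinate i : Fin d, every u ∈ X, and every token a : Fin S with a ≠ m, one has γ · q0 (u[i ↦ a]) ≤ q0 (u[i ↦ m]) (i.e., in the data distribution the mask token has conditional likelihood at least γ times that of any other token, in every coordinate and context). Then for every t > 0 and every admissible reverse transition (x, y) (x and y differ in exactly one coordinate j with x j = m and y j ≠ m), the score satisfies the non-diverging upper bound q_t y ≤ min (1/t) (1/γ) · q_t x; in particular γ · q_t y ≤ q_t x, a bound uniform in t. -/

import Mathlib

open Finset

/-- Per-token absorbing transition kernel. -/
noncomputable def absK (S : ℕ) (m : Fin S) (t : ℝ) (a b : Fin S) : ℝ :=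
  if a = b then (if a = m then 1 else Real.exp (-t))
  else (if b = m then 1 - Real.exp (-t) else 0)

/-- Forward marginal at time `t` of the absorbing diffusion started at `q0`. -/
noncomputable def fwd (S d : ℕ) (m : Fin S) (q0 : (Fin d → Fin S) → ℝ) (t : ℝ)
    (x : Fin d → Fin S) : ℝ :=
  ∑ x0 : Fin d → Fin S, q0 x0 * ∏ i : Fin d, absK S m t (x0 i) (x i)

/-- Number of masked coordinates. -/
def nmask (S d : ℕ) (m : Fin S) (x : Fin d → Fin S) : ℕ :=
  (Finset.univ.filter (fun i => x i = m)).card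

/-
Splitting `q_t` over the clean token `a` at the coordinate `j` where `x` and `y` differ gives
`q_t x = ∑ a, P_t a (x j) * A a`, where `A a` is the joint mass of the clean token `a` at `j` and
the noisy context off `j`, which `x` and `y` share. An unmasked token can only come from itself,
so `q_t y = exp (-t) * A (y j)`, whereas the mask is reached both from itself and from `y j`, so
`q_t x ≥ A m + (1 - exp (-t)) * A (y j)`. The likelihood hypothesis passes to
`γ * A (y j) ≤ A m`, hence `(exp t * (1 + γ) - 1) * q_t y ≤ q_t x`, and the factor on the left is
at least `t` and at least `γ`.
-/

section SliceSums

variable {ι α M : Type*} [Fintype ι] [DecidableEq ι] [Fintype α] [DecidableEq α]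
  [AddCommMonoid M]

theorem sum_filter_apply_eq_update (f : (ι → α) → M) (j : ι) (a b : α) :
    ∑ z with z j = a, f z = ∑ z with z j = b, f (Function.update z j a) := by
  refine sum_nbij' (Function.update · j b) (Function.update · j a) ?_ ?_ ?_ ?_ ?_ <;>
    simp +contextual [eq_comm]

end SliceSums

section Kernel

variable {S : ℕ} {m a b : Fin S} {t : ℝ}

theorem absK_mask_mask : absK S m t m m = 1 := by
  simp [absK]

theorem absK_self_of_ne_mask (ha : a ≠ m) : absK S m t a a = Real.exp (-t) := by
  simp [absK, ha]

theorem absK_mask_right (ha : a ≠ m) : absK S m t a m = 1 - Real.exp (-t) := by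
  simp [absK, ha]

theorem absK_eq_zero (hab : a ≠ b) (hb : b ≠ m) : absK S m t a b = 0 := by
  simp [absK, hab, hb]

theorem absK_nonneg (ht : 0 ≤ t) (a b : Fin S) : 0 ≤ absK S m t a b := by
  have hexp : Real.exp (-t) ≤ 1 := Real.exp_le_one_iff.mpr (neg_nonpos.mpr ht)
  unfold absK
  split_ifs
  exacts [zero_le_one, (Real.exp_pos _).le, sub_nonneg.mpr hexp, le_rfl]

end Kernel

/-- The joint mass of the clean token `a` at coordinate `j` and the time-`t` tokens `x i` at all
coordinates `i ≠ j`. The argument is a full state `x` so that no type of contexts is needed; the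
value `x j` is ignored. -/
noncomputable def cleanTokenMass (S d : ℕ) (m : Fin S) (q0 : (Fin d → Fin S) → ℝ) (t : ℝ)
    (j : Fin d) (x : Fin d → Fin S) (a : Fin S) : ℝ :=
  ∑ z with z j = a, q0 z * ∏ i ∈ univ.erase j, absK S m t (z i) (x i)

section Marginal

variable {S d : ℕ} {m : Fin S} {q0 : (Fin d → Fin S) → ℝ} {t : ℝ} {j : Fin d}
  {x y : Fin d → Fin S}

theorem prod_absK_erase_nonneg (ht : 0 ≤ t) (j : Fin d) (z x : Fin d → Fin S) :
    0 ≤ ∏ i ∈ univ.erase j, absK S m t (z i) (x i) :=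
  prod_nonneg fun _ _ => absK_nonneg ht _ _

theorem cleanTokenMass_nonneg (hq0 : ∀ z, 0 ≤ q0 z) (ht : 0 ≤ t) (j : Fin d)
    (x : Fin d → Fin S) (a : Fin S) : 0 ≤ cleanTokenMass S d m q0 t j x a :=
  sum_nonneg fun z _ => mul_nonneg (hq0 z) (prod_absK_erase_nonneg ht j z x)

theorem cleanTokenMass_congr (hxy : ∀ i, i ≠ j → x i = y i) (a : Fin S) :
    cleanTokenMass S d m q0 t j x a = cleanTokenMass S d m q0 t j y a := by
  refine sum_congr rfl fun z _ => congrArg (q0 z * ·) (prod_congr rfl fun i hi => ?_)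
  rw [hxy i (ne_of_mem_erase hi)]

theorem mul_cleanTokenMass_le {γ : ℝ} {a b : Fin S} (ht : 0 ≤ t)
    (hlik : ∀ u : Fin d → Fin S,
      γ * q0 (Function.update u j a) ≤ q0 (Function.update u j b)) (x : Fin d → Fin S) :
    γ * cleanTokenMass S d m q0 t j x a ≤ cleanTokenMass S d m q0 t j x b := by
  unfold cleanTokenMass
  rw [sum_filter_apply_eq_update _ j b a, mul_sum]
  refine sum_le_sum fun z hz => ?_
  have hctx : ∏ i ∈ univ.erase j, absK S m t (Function.update z j b i) (x i) =
      ∏ i ∈ univ.erase j, absK S m t (z i) (x i) :=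
    prod_congr rfl fun i hi => by rw [Function.update_of_ne (ne_of_mem_erase hi)]
  have hz_lik : γ * q0 z ≤ q0 (Function.update z j b) := by
    simpa only [← (mem_filter.mp hz).2, Function.update_eq_self] using hlik z
  rw [hctx, ← mul_assoc]
  exact mul_le_mul_of_nonneg_right hz_lik (prod_absK_erase_nonneg ht j z x)

theorem fwd_eq_sum_absK_mul_cleanTokenMass (j : Fin d) (x : Fin d → Fin S) :
    fwd S d m q0 t x = ∑ a, absK S m t a (x j) * cleanTokenMass S d m q0 t j x a := by
  unfold fwd cleanTokenMass
  rw [← sum_fiberwise univ (fun z => z j)]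
  refine sum_congr rfl fun a _ => ?_
  rw [mul_sum]
  refine sum_congr rfl fun z hz => ?_
  rw [← mul_prod_erase univ _ (mem_univ j), (mem_filter.mp hz).2, mul_left_comm]

theorem fwd_nonneg (hq0 : ∀ z, 0 ≤ q0 z) (ht : 0 ≤ t) (x : Fin d → Fin S) :
    0 ≤ fwd S d m q0 t x :=
  sum_nonneg fun z _ => mul_nonneg (hq0 z) (prod_nonneg fun _ _ => absK_nonneg ht _ _)

theorem fwd_eq_exp_neg_mul_cleanTokenMass (hyj : y j ≠ m) :
    fwd S d m q0 t y = Real.exp (-t) * cleanTokenMass S d m q0 t j y (y j) := by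
  rw [fwd_eq_sum_absK_mul_cleanTokenMass j, Fintype.sum_eq_single (y j) fun a ha => ?_,
    absK_self_of_ne_mask hyj]
  rw [absK_eq_zero ha hyj, zero_mul]

theorem cleanTokenMass_add_le_fwd (hq0 : ∀ z, 0 ≤ q0 z) (ht : 0 ≤ t) (hxj : x j = m)
    {a : Fin S} (ha : a ≠ m) :
    cleanTokenMass S d m q0 t j x m + (1 - Real.exp (-t)) * cleanTokenMass S d m q0 t j x a ≤
      fwd S d m q0 t x := by
  have hnonneg (b : Fin S) : 0 ≤ absK S m t b m * cleanTokenMass S d m q0 t j x b :=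
    mul_nonneg (absK_nonneg ht b m) (cleanTokenMass_nonneg hq0 ht j x b)
  have htwo := add_le_sum (fun b _ => hnonneg b) (mem_univ m) (mem_univ a) ha.symm
  rwa [absK_mask_mask, one_mul, absK_mask_right ha, ← hxj,
    ← fwd_eq_sum_absK_mul_cleanTokenMass j, hxj] at htwo

end Marginal

section Rate

variable {t γ : ℝ}

theorem le_exp_mul_one_add_sub_one_left (hγ : 0 ≤ γ) : t ≤ Real.exp t * (1 + γ) - 1 := by
  have hexp := Real.add_one_le_exp t
  have hprod : 0 ≤ Real.exp t * γ := by positivity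
  linarith

theorem le_exp_mul_one_add_sub_one_right (ht : 0 ≤ t) (hγ : 0 ≤ γ) :
    γ ≤ Real.exp t * (1 + γ) - 1 := by
  have hexp : 1 * (1 + γ) ≤ Real.exp t * (1 + γ) := by
    gcongr
    exact Real.one_le_exp ht
  linarith

theorem le_min_one_div_mul_and_mul_le {c p r : ℝ} (ht : 0 < t) (hγ : 0 < γ) (htc : t ≤ c)
    (hγc : γ ≤ c) (hp : 0 ≤ p) (hcp : c * p ≤ r) :
    p ≤ min (1 / t) (1 / γ) * r ∧ γ * p ≤ r := by
  have htp : t * p ≤ r := (mul_le_mul_of_nonneg_right htc hp).trans hcp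
  have hγp : γ * p ≤ r := (mul_le_mul_of_nonneg_right hγc hp).trans hcp
  refine ⟨?_, hγp⟩
  rcases min_choice (1 / t) (1 / γ) with h | h <;> rw [h, one_div_mul_eq_div]
  · rwa [le_div_iff₀' ht]
  · rwa [le_div_iff₀' hγ]

end Rate

theorem absorbing_score_upper_bound_no_early_stopping_general {S d : ℕ} {m : Fin S}
    {q0 : (Fin d → Fin S) → ℝ} (hq0 : ∀ z, 0 ≤ q0 z) {γ t : ℝ} (ht : 0 ≤ t)
    {x y : Fin d → Fin S} {j : Fin d} (hxj : x j = m) (hyj : y j ≠ m)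
    (hxy : ∀ i, i ≠ j → x i = y i)
    (hmask : ∀ u : Fin d → Fin S,
      γ * q0 (Function.update u j (y j)) ≤ q0 (Function.update u j m)) :
    (Real.exp t * (1 + γ) - 1) * fwd S d m q0 t y ≤ fwd S d m q0 t x := by
  set A := cleanTokenMass S d m q0 t j x
  have hexp : Real.exp t * Real.exp (-t) = 1 := by
    rw [← Real.exp_add, add_neg_cancel, Real.exp_zero]
  calc (Real.exp t * (1 + γ) - 1) * fwd S d m q0 t y
      = (Real.exp t * (1 + γ) - 1) * (Real.exp (-t) * A (y j)) := by
        rw [fwd_eq_exp_neg_mul_cleanTokenMass hyj, ← cleanTokenMass_congr hxy]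
    _ = γ * A (y j) + (1 - Real.exp (-t)) * A (y j) := by
        linear_combination (1 + γ) * A (y j) * hexp
    _ ≤ A m + (1 - Real.exp (-t)) * A (y j) := by
        gcongr
        exact mul_cleanTokenMass_le ht hmask x
    _ ≤ fwd S d m q0 t x := cleanTokenMass_add_le_fwd hq0 ht hxj hyj

/-- Non-diverging score upper bound: if in the data distribution the mask token has
conditional likelihood at least `γ` times that of any other token (in every coordinate
and context), then `q_t(y) ≤ min (1/t) (1/γ) · q_t(x)`, and in particular
`γ · q_t(y) ≤ q_t(x)`, uniformly in `t`. -/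
theorem absorbing_score_upper_bound_no_early_stopping (S d : ℕ) (hS : 2 ≤ S) (hd : 1 ≤ d)
    (m : Fin S) (q0 : (Fin d → Fin S) → ℝ) (hq0 : ∀ x, 0 ≤ q0 x)
    (hq0sum : ∑ x : Fin d → Fin S, q0 x = 1)
    (γ : ℝ) (hγ : 0 < γ)
    (hmask : ∀ (i : Fin d) (u : Fin d → Fin S) (a : Fin S), a ≠ m →
      γ * q0 (Function.update u i a) ≤ q0 (Function.update u i m)) :
    ∀ t : ℝ, 0 < t →
      ∀ (x y : Fin d → Fin S) (j : Fin d),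
        x j = m → y j ≠ m → (∀ i : Fin d, i ≠ j → x i = y i) →
        fwd S d m q0 t y ≤ min (1 / t) (1 / γ) * fwd S d m q0 t x ∧
          γ * fwd S d m q0 t y ≤ fwd S d m q0 t x := by
  intro t ht x y j hxj hyj hxy
  exact le_min_one_div_mul_and_mul_le ht hγ (le_exp_mul_one_add_sub_one_left hγ.le)
    (le_exp_mul_one_add_sub_one_right ht.le hγ.le) (fwd_nonneg hq0 ht.le y)
    (absorbing_score_upper_bound_no_early_stopping_general hq0 ht.le hxj hyj hxy
      fun u => hmask j u (y j) hyj)
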